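/- Let n ≥ 1 and β ≥ 0. There is a constant C, depending only on n and β, such that for all smooth compactly supported functions f, g : ℝⁿ → ℂ, ‖ (−Δ)^{β/2}(fg) ‖_{L¹(ℝⁿ)} ≤ C ‖f‖_{W^{β,2}} ‖g‖_{W^{β,2}}. -/

import Mathlib

open MeasureTheory Filter Set
open scoped ENNReal RealInnerProductSpace

noncomputable section

abbrev Euc (n : ℕ) := EuclideanSpace ℝ (Fin n)

/-- The Japanese bracket `⟨x⟩ = (1+|x|²)^{1/2}`. -/
def jap {n : ℕ} (x : Euc n) : ℝ := Real.sqrt (1 + ‖x‖ ^ 2)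

/-- The Ewald sphere measure `σ_{rη}`: the `(n-1)`-dimensional Hausdorff measure restricted
to `Γ_r(η) = {ξ : |ξ - η/2| = r|η|/2}`. -/
def ewaldM (n : ℕ) (r : ℝ) (η : Euc n) : Measure (Euc n) :=
  (MeasureTheory.Measure.hausdorffMeasure ((n : ℝ) - 1)).restrict
    (Metric.sphere ((2 : ℝ)⁻¹ • η) (r * ‖η‖ / 2))

/-- The Fourier transform `f̂(ξ) = ∫ e^{-iξ·x} f(x) dx`. -/
def ft {n : ℕ} (f : Euc n → ℂ) (ξ : Euc n) : ℂ :=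
  ∫ x : Euc n, Complex.exp (-Complex.I * ((⟪ξ, x⟫ : ℝ) : ℂ)) * f x

/-- `⟨D⟩^β f`: inverse Fourier transform of `⟨ξ⟩^β f̂(ξ)`. -/
def besselD {n : ℕ} (β : ℝ) (f : Euc n → ℂ) (x : Euc n) : ℂ :=
  (((2 * Real.pi) ^ n : ℝ)⁻¹ : ℝ) •
    ∫ ξ : Euc n, Complex.exp (Complex.I * ((⟪ξ, x⟫ : ℝ) : ℂ)) *
      (((jap ξ ^ β : ℝ) : ℂ) * ft f ξ)

/-- The weighted Sobolev norm `‖f‖_{W^{β,2}_δ} = ‖⟨·⟩^δ ⟨D⟩^β f‖_{L²}`. -/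
def wSobNorm {n : ℕ} (β δ : ℝ) (f : Euc n → ℂ) : ℝ≥0∞ :=
  eLpNorm (fun x : Euc n => (jap x ^ δ : ℝ) • besselD β f x) 2 volume

/-- The spherical operator
`S_r(q)(η) = (2/(|η|(1+r))) ∫_{Γ_r(η)} q̂(ξ) q̂(η-ξ) dσ_{rη}(ξ)`. -/
def Sr {n : ℕ} (r : ℝ) (q : Euc n → ℂ) (η : Euc n) : ℂ :=
  ((2 / (‖η‖ * (1 + r))) : ℝ) • ∫ ξ, ft q ξ * ft q (η - ξ) ∂(ewaldM n r η)

/-- `K_r(g₁,g₂)(η) = (1/|η|) ∫_{Γ_r(η)} |g₁(ξ)||g₂(η-ξ)| dσ_{rη}(ξ)`. -/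
def Kr {n : ℕ} (r : ℝ) (g₁ g₂ : Euc n → ℂ) (η : Euc n) : ℝ :=
  ‖η‖⁻¹ * ∫ ξ, ‖g₁ ξ‖ * ‖g₂ (η - ξ)‖ ∂(ewaldM n r η)

/-- The fractional Laplacian `(-Δ)^{β/2} u = F⁻¹(|ξ|^β û(ξ))`. -/
def fracLap {n : ℕ} (β : ℝ) (u : Euc n → ℂ) (x : Euc n) : ℂ :=
  (((2 * Real.pi) ^ n : ℝ)⁻¹ : ℝ) •
    ∫ ξ : Euc n, Complex.exp (Complex.I * ((⟪ξ, x⟫ : ℝ) : ℂ)) *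
      (((‖ξ‖ ^ β : ℝ) : ℂ) * ft u ξ)

/-! For `0 < β < 2k`, the operator `|D|^β` is, up to a constant, the integral of the centred
differences of order `2k` against the kernel `|y|^{-d-β}`: on the Fourier side this is the
homogeneity and rotation invariance of `∫ |y|^{-d-β} |e^{2πi⟪y,ξ⟫} - 1|^{2k} dy`. The Leibniz rule
for finite differences then gives `|D|^β (fg) = f |D|^β g + |D|^β f · g + ∫ |y|^{-d-β} (defect) dy`,
the last integral up to a constant, where the defect is a sum of products of an `i`-th difference of
`f` and a `(2k - i)`-th difference of `g`, `0 < i < 2k`, plus end terms of the same size. By the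
Cauchy–Schwarz inequality in `x` and then in `y`, with `β` split between the two factors in
proportion to `i` and `2k - i`, each product is bounded by homogeneous Sobolev norms of orders at
most `β`, which Plancherel's theorem computes. -/

open FourierTransform SchwartzMap

section Leibniz

open Finset.HasAntidiagonal (antidiagonal mem_antidiagonal)

variable {M R : Type*} [AddCommMonoid M] [Ring R]

lemma fwdDiff_shift_mul (h : M) (F G : M → R) (j : ℕ) :
    fwdDiff h (fun x ↦ F (x + j • h) * G x)
      = (fun x ↦ F (x + (j + 1) • h) * fwdDiff h G x)
        + fun x ↦ fwdDiff h F (x + j • h) * G x := by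
  funext x
  simp only [fwdDiff, Pi.add_apply, succ_nsmul, ← add_assoc, add_right_comm x h]
  noncomm_ring

theorem fwdDiff_iter_mul (h : M) (f g : M → R) (n : ℕ) :
    (fwdDiff h)^[n] (f * g) = ∑ ij ∈ antidiagonal n,
      n.choose ij.1 • fun x ↦ (fwdDiff h)^[ij.1] f (x + ij.2 • h) * (fwdDiff h)^[ij.2] g x := by
  induction n with
  | zero => funext x; simp
  | succ n ih =>
    rw [Finset.sum_antidiagonal_choose_succ_nsmul
      (fun i j x ↦ (fwdDiff h)^[i] f (x + j • h) * (fwdDiff h)^[j] g x),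
      Function.iterate_succ_apply', ih, fwdDiff_finsetSum, ← Finset.sum_add_distrib]
    refine Finset.sum_congr rfl fun ij hij ↦ ?_
    simp only [fwdDiff_const_smul, fwdDiff_shift_mul, Function.iterate_succ_apply', smul_add]
    rw [Nat.choose_symm_of_eq_add (mem_antidiagonal.1 hij).symm]

end Leibniz

section DiffSymbol

variable {E : Type*} [NormedAddCommGroup E] [InnerProductSpace ℝ E]

/-- The symbol `e^{2πi⟪y,ξ⟫} - 1` of the difference operator `u ↦ u(· + y) - u`: with Mathlib's
normalisation of `𝓕`, the operator `fwdDiff y` multiplies `𝓕 u` by `diffSymbol y`. -/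
def diffSymbol (y ξ : E) : ℂ := 𝐞 ⟪y, ξ⟫ - 1

@[fun_prop]
lemma continuous_diffSymbol {X : Type*} [TopologicalSpace X] {y ξ : X → E} (hy : Continuous y)
    (hξ : Continuous ξ) : Continuous fun x ↦ diffSymbol (y x) (ξ x) := by
  unfold diffSymbol
  fun_prop

lemma norm_diffSymbol_le_two (y ξ : E) : ‖diffSymbol y ξ‖ ≤ 2 :=
  (norm_sub_le _ _).trans_eq (by rw [Circle.norm_coe, norm_one, one_add_one_eq_two])

lemma norm_diffSymbol_le_mul (y ξ : E) : ‖diffSymbol y ξ‖ ≤ 2 * Real.pi * ‖ξ‖ * ‖y‖ :=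
  calc ‖diffSymbol y ξ‖ ≤ ‖2 * Real.pi * ⟪y, ξ⟫‖ := by
        rw [diffSymbol, Real.fourierChar_apply, mul_comm _ Complex.I]
        exact Real.norm_exp_I_mul_ofReal_sub_one_le
    _ = 2 * Real.pi * |⟪y, ξ⟫| := by
        rw [norm_mul, Real.norm_of_nonneg Real.two_pi_pos.le, Real.norm_eq_abs]
    _ ≤ 2 * Real.pi * (‖y‖ * ‖ξ‖) := by gcongr; exact abs_real_inner_le_norm y ξ
    _ = 2 * Real.pi * ‖ξ‖ * ‖y‖ := by ring

lemma norm_diffSymbol_nsmul_le (k : ℕ) (y ξ : E) :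
    ‖diffSymbol (k • y) ξ‖ ≤ k * ‖diffSymbol y ξ‖ := by
  have hgeom : diffSymbol (k • y) ξ
      = (∑ i ∈ Finset.range k, (𝐞 ⟪y, ξ⟫ : ℂ) ^ i) * diffSymbol y ξ := by
    rw [diffSymbol, diffSymbol, geom_sum_mul, ← Circle.coe_pow, ← AddChar.map_nsmul_eq_pow,
      ← Nat.cast_smul_eq_nsmul ℝ, real_inner_smul_left, nsmul_eq_mul]
  rw [hgeom, norm_mul]
  gcongr
  exact (norm_sum_le _ _).trans (by simp [Circle.norm_coe])

end DiffSymbol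

lemma integrableOn_rpow_mul_min_pow {s A B : ℝ} {p : ℕ} (hs : 0 < s) (hsp : s < p) (hA : 0 ≤ A)
    (hB : 0 ≤ B) : IntegrableOn (fun r : ℝ ↦ r ^ (-1 - s) * min A (B * r) ^ p) (Ioi 0) := by
  have hmeas : AEStronglyMeasurable (fun r : ℝ ↦ r ^ (-1 - s) * min A (B * r) ^ p) := by fun_prop
  have hnn {r : ℝ} (hr : 0 < r) : 0 ≤ r ^ (-1 - s) * min A (B * r) ^ p := by positivity
  rw [← Ioc_union_Ioi_eq_Ioi zero_le_one]
  refine IntegrableOn.union ?_ ?_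
  · have hdom : IntegrableOn (fun r : ℝ ↦ B ^ p * r ^ (p - 1 - s)) (Ioc 0 1) :=
      (intervalIntegral.intervalIntegrable_rpow' (by linarith)).1.const_mul _
    refine hdom.mono' hmeas.restrict (ae_restrict_of_forall_mem measurableSet_Ioc fun r hr ↦ ?_)
    rw [Real.norm_of_nonneg (hnn hr.1)]
    calc r ^ (-1 - s) * min A (B * r) ^ p ≤ r ^ (-1 - s) * (B * r) ^ p := by
          have := hr.1
          gcongr
          exact min_le_right _ _
      _ = B ^ p * (r ^ (-1 - s) * r ^ (p : ℝ)) := by rw [Real.rpow_natCast]; ring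
      _ = B ^ p * r ^ (p - 1 - s) := by rw [← Real.rpow_add hr.1]; ring_nf
  · have hdom : IntegrableOn (fun r : ℝ ↦ r ^ (-1 - s) * A ^ p) (Ioi 1) :=
      (integrableOn_Ioi_rpow_of_lt (by linarith) one_pos).mul_const _
    refine hdom.mono' hmeas.restrict (ae_restrict_of_forall_mem measurableSet_Ioi fun r hr ↦ ?_)
    have hr0 : 0 < r := one_pos.trans hr
    rw [Real.norm_of_nonneg (hnn hr0)]
    gcongr
    exact min_le_left _ _

section Kernel

variable {E : Type*} [NormedAddCommGroup E] [InnerProductSpace ℝ E]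

/-- The kernel `|y|^{-d-s}`, `d = dim E`, of the hypersingular-integral representation of
`(-Δ)^{s/2}`. -/
def hypersingularKernel (s : ℝ) (y : E) : ℝ := ‖y‖ ^ (-(Module.finrank ℝ E : ℝ) - s)

lemma hypersingularKernel_nonneg (s : ℝ) (y : E) : 0 ≤ hypersingularKernel s y :=
  Real.rpow_nonneg (norm_nonneg y) _

lemma sqrt_hypersingularKernel_mul_sqrt {s t : ℝ} (hst : 0 < s + t) (y : E) :
    √(hypersingularKernel (2 * s) y) * √(hypersingularKernel (2 * t) y)
      = hypersingularKernel (s + t) y := by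
  have : (0 : ℝ) ≤ Module.finrank ℝ E := Nat.cast_nonneg _
  simp only [hypersingularKernel, Real.sqrt_eq_rpow, ← Real.rpow_mul (norm_nonneg y)]
  rw [← Real.rpow_add' (norm_nonneg y) (by linarith)]
  ring_nf

lemma sq_ofReal_sqrt_hypersingularKernel_mul (s : ℝ) (y : E) (a : ℝ≥0∞) :
    (ENNReal.ofReal √(hypersingularKernel s y) * a) ^ 2
      = ENNReal.ofReal (hypersingularKernel s y) * a ^ 2 := by
  rw [mul_pow, ← ENNReal.ofReal_pow (Real.sqrt_nonneg _),
    Real.sq_sqrt (hypersingularKernel_nonneg s y)]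

variable [MeasurableSpace E] [BorelSpace E]

@[fun_prop]
lemma measurable_hypersingularKernel (s : ℝ) : Measurable (hypersingularKernel s : E → ℝ) :=
  measurable_norm.pow_const _

variable [FiniteDimensional ℝ E]

lemma integral_hypersingularKernel_mul_comp_inner (s : ℝ) (φ : ℝ → ℝ) {e ξ : E} (he : ‖e‖ = 1)
    (hξ : ξ ≠ 0) : ∫ y, hypersingularKernel s y * φ ⟪y, ξ⟫
      = ‖ξ‖ ^ s * ∫ y, hypersingularKernel s y * φ ⟪y, e⟫ := by
  have hξ0 : 0 < ‖ξ‖ := norm_pos_iff.2 hξ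
  obtain ⟨ρ, hρ⟩ : ∃ ρ : E ≃ₗᵢ[ℝ] E, ρ (‖ξ‖ • e) = ξ :=
    ⟨_, Submodule.reflection_sub (by rw [norm_smul, norm_norm, he, mul_one])⟩
  set F : E → ℝ := fun y ↦ hypersingularKernel s y * φ ⟪y, e⟫
  have hF (y : E) : hypersingularKernel s (ρ y) * φ ⟪ρ y, ξ⟫
      = ‖ξ‖ ^ (Module.finrank ℝ E + s) * F (‖ξ‖ • y) := by
    have hinner : ⟪ρ y, ξ⟫ = ⟪‖ξ‖ • y, e⟫ := by
      rw [← hρ, ρ.inner_map_map, real_inner_smul_left, real_inner_smul_right, hρ]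
    have hscale : hypersingularKernel s (‖ξ‖ • y)
        = ‖ξ‖ ^ (-(Module.finrank ℝ E + s)) * hypersingularKernel s y := by
      rw [hypersingularKernel, norm_smul, norm_norm, Real.mul_rpow hξ0.le (norm_nonneg y),
        neg_add']
      rfl
    simp only [F, hinner, hscale, Real.rpow_neg hξ0.le]
    rw [hypersingularKernel, ρ.norm_map, ← hypersingularKernel]
    field_simp
  calc ∫ y, hypersingularKernel s y * φ ⟪y, ξ⟫
      = ∫ y, hypersingularKernel s (ρ y) * φ ⟪ρ y, ξ⟫ :=
        (ρ.measurePreserving.integral_comp ρ.toHomeomorph.measurableEmbedding _).symm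
    _ = ‖ξ‖ ^ (Module.finrank ℝ E + s) * ∫ y, F (‖ξ‖ • y) := by
        simp only [hF, integral_const_mul]
    _ = ‖ξ‖ ^ s * ∫ y, F y := by
        rw [Measure.integral_comp_smul, abs_of_nonneg (by positivity), smul_eq_mul,
          Real.rpow_add hξ0, Real.rpow_natCast]
        field_simp

variable [Nontrivial E]

lemma integrable_hypersingularKernel_mul_min_pow {s A B : ℝ} {p : ℕ} (hs : 0 < s) (hsp : s < p)
    (hA : 0 ≤ A) (hB : 0 ≤ B) :
    Integrable fun y : E ↦ hypersingularKernel s y * min A (B * ‖y‖) ^ p := by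
  refine (integrable_fun_norm_addHaar volume
    (f := fun r ↦ r ^ (-(Module.finrank ℝ E : ℝ) - s) * min A (B * r) ^ p)).2 ?_
  refine (integrableOn_rpow_mul_min_pow hs hsp hA hB).congr_fun (fun r hr ↦ ?_) measurableSet_Ioi
  have hr0 : 0 < r := hr
  have hdim : r ^ (-1 - s)
      = r ^ (Module.finrank ℝ E - 1) * r ^ (-(Module.finrank ℝ E : ℝ) - s) := by
    rw [← Real.rpow_natCast, ← Real.rpow_add hr0, Nat.cast_sub Module.finrank_pos, Nat.cast_one]
    ring_nf
  simp only [smul_eq_mul, hdim, mul_assoc]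

lemma integrable_hypersingularKernel_mul_norm_diffSymbol_pow {s : ℝ} {p : ℕ} (hs : 0 < s)
    (hsp : s < p) (ξ : E) :
    Integrable fun y ↦ hypersingularKernel s y * ‖diffSymbol y ξ‖ ^ p := by
  refine (integrable_hypersingularKernel_mul_min_pow hs hsp zero_le_two
    (B := 2 * Real.pi * ‖ξ‖) (by positivity)).mono' ?_ (.of_forall fun y ↦ ?_)
  · fun_prop
  · rw [norm_mul, norm_pow, norm_norm, Real.norm_of_nonneg (hypersingularKernel_nonneg s y)]
    have := hypersingularKernel_nonneg s y
    gcongr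
    exact le_min (norm_diffSymbol_le_two y ξ) (norm_diffSymbol_le_mul y ξ)

lemma integral_hypersingularKernel_mul_norm_diffSymbol_pow_pos {s : ℝ} {p : ℕ} (hs : 0 < s)
    (hsp : s < p) {ξ : E} (hξ : ξ ≠ 0) :
    0 < ∫ y, hypersingularKernel s y * ‖diffSymbol y ξ‖ ^ p := by
  have hopen : IsOpen {y : E | diffSymbol y ξ ≠ 0} := isOpen_ne_fun (by fun_prop) continuous_const
  have hne : diffSymbol ((2 * ‖ξ‖ ^ 2)⁻¹ • ξ) ξ ≠ 0 := by
    have hhalf : ⟪(2 * ‖ξ‖ ^ 2)⁻¹ • ξ, ξ⟫ = 1 / 2 := by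
      rw [real_inner_smul_left, real_inner_self_eq_norm_sq]
      have := norm_ne_zero_iff.2 hξ
      field_simp
    rw [diffSymbol, hhalf, Real.fourierChar_apply,
      show 2 * Real.pi * (1 / 2) = Real.pi by ring, Complex.exp_pi_mul_I]
    norm_num
  rw [integral_pos_iff_support_of_nonneg
    (fun y ↦ mul_nonneg (hypersingularKernel_nonneg s y) (by positivity))
    (integrable_hypersingularKernel_mul_norm_diffSymbol_pow hs hsp ξ)]
  refine (hopen.measure_pos volume ⟨_, hne⟩).trans_le (measure_mono fun y hy ↦ ?_)
  have hy0 : y ≠ 0 := by rintro rfl; simp [diffSymbol] at hy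
  exact mul_ne_zero (Real.rpow_pos_of_pos (norm_pos_iff.2 hy0) _).ne'
    (pow_ne_zero _ (norm_ne_zero_iff.2 hy))

theorem exists_integral_hypersingularKernel_mul_norm_diffSymbol_pow (E : Type*)
    [NormedAddCommGroup E] [InnerProductSpace ℝ E] [FiniteDimensional ℝ E] [MeasurableSpace E]
    [BorelSpace E] [Nontrivial E] {s : ℝ} {p : ℕ} (hs : 0 < s) (hsp : s < p) :
    ∃ c : ℝ, 0 < c ∧ ∀ ξ : E,
      ∫ y, hypersingularKernel s y * ‖diffSymbol y ξ‖ ^ p = c * ‖ξ‖ ^ s := by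
  obtain ⟨e, he⟩ := exists_norm_eq E zero_le_one
  refine ⟨∫ y, hypersingularKernel s y * ‖diffSymbol y e‖ ^ p,
    integral_hypersingularKernel_mul_norm_diffSymbol_pow_pos hs hsp
      (norm_ne_zero_iff.1 (he.trans_ne one_ne_zero)), fun ξ ↦ ?_⟩
  rcases eq_or_ne ξ 0 with rfl | hξ
  · have hp : p ≠ 0 := by rintro rfl; exact absurd hsp (by simpa using hs.le)
    simp [diffSymbol, hp, Real.zero_rpow hs.ne']
  · rw [mul_comm]
    exact integral_hypersingularKernel_mul_comp_inner s
      (fun t ↦ ‖(𝐞 t - 1 : ℂ)‖ ^ p) he hξ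

end Kernel

section FourierInv

variable {E : Type*} [NormedAddCommGroup E] [InnerProductSpace ℝ E] [FiniteDimensional ℝ E]
  [MeasurableSpace E] [BorelSpace E]
variable {F : Type*} [NormedAddCommGroup F]

lemma continuous_fourierInv_of_integrable [NormedSpace ℂ F] {h : E → F} (hh : Integrable h) :
    Continuous (𝓕⁻ h) := by
  rw [← Real.Lp.fourierTransformInv_toLp (memLp_one_iff_integrable.2 hh)]
  exact BoundedContinuousFunction.continuous _

lemma integral_fourierInv_smul_eq_integral_smul_fourierInv [NormedSpace ℂ F] [CompleteSpace F]
    {φ : E → ℂ} {h : E → F} (hφ : Integrable φ) (hh : Integrable h) :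
    ∫ x, 𝓕⁻ φ x • h x = ∫ x, φ x • 𝓕⁻ h x := by
  have hflip : (-innerₗ E).flip = -innerₗ E := by
    ext x y
    simp [real_inner_comm]
  have hcont : Continuous fun p : E × E ↦ (-innerₗ E) p.1 p.2 := by
    simp only [LinearMap.neg_apply, innerₗ_apply_apply]
    fun_prop
  have h := VectorFourier.integral_fourierIntegral_smul_eq_flip (μ := volume) (ν := volume)
    Real.continuous_fourierChar hcont hφ hh
  rwa [hflip] at h

variable [InnerProductSpace ℂ F] [CompleteSpace F]

lemma fourierInv_toLp_ae_eq {h : E → F} (h₁ : Integrable h) (h₂ : MemLp h 2) :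
    ((𝓕⁻ (h₂.toLp h) : Lp F 2 (volume : Measure E)) : E → F) =ᵐ[volume] 𝓕⁻ h := by
  set H : Lp F 2 (volume : Measure E) := h₂.toLp h
  refine ae_eq_of_integral_contDiff_smul_eq ((Lp.memLp (𝓕⁻ H)).locallyIntegrable one_le_two)
    (continuous_fourierInv_of_integrable h₁).locallyIntegrable fun φ hφ hφc ↦ ?_
  have hΦc : HasCompactSupport (Complex.ofRealCLM ∘ φ) := hφc.comp_left rfl
  set Φ : 𝓢(E, ℂ) := hΦc.toSchwartzMap (by fun_prop)
  have hΦ (v : E → F) : ∫ x, φ x • v x = ∫ x, Φ x • v x := by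
    simp [Φ, Complex.coe_smul]
  calc ∫ x, φ x • (𝓕⁻ H : Lp F 2 (volume : Measure E)) x
      = ∫ x, 𝓕⁻ Φ x • H x := by
        rw [hΦ, ← Lp.toTemperedDistribution_apply, ← Lp.fourierInv_toTemperedDistribution_eq,
          TemperedDistribution.fourierInv_apply, Lp.toTemperedDistribution_apply]
    _ = ∫ x, 𝓕⁻ (Φ : E → ℂ) x • h x := by
        refine integral_congr_ae (h₂.coeFn_toLp.mono fun x hx ↦ ?_)
        simp only [H, hx, fourierInv_coe]
    _ = ∫ x, φ x • 𝓕⁻ h x := by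
        rw [hΦ, integral_fourierInv_smul_eq_integral_smul_fourierInv Φ.integrable h₁]

theorem eLpNorm_fourierInv {h : E → F} (h₁ : Integrable h) (h₂ : MemLp h 2) :
    eLpNorm (𝓕⁻ h) 2 = eLpNorm h 2 := by
  have hnorm : ‖𝓕⁻ (h₂.toLp h)‖ₑ = ‖h₂.toLp h‖ₑ := by
    rw [← enorm_norm, ← Lp.norm_fourier_eq, fourier_fourierInv_eq, enorm_norm]
  rwa [Lp.enorm_def, eLpNorm_congr_ae (fourierInv_toLp_ae_eq h₁ h₂), Lp.enorm_toLp] at hnorm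

end FourierInv

section Differences

variable {E : Type*} [NormedAddCommGroup E] [InnerProductSpace ℝ E] [FiniteDimensional ℝ E]
  [MeasurableSpace E] [BorelSpace E]
variable {F : Type*} [NormedAddCommGroup F]

@[fun_prop]
lemma measurable_diffSymbol {X : Type*} [MeasurableSpace X] {y ξ : X → E} (hy : Measurable y)
    (hξ : Measurable ξ) : Measurable fun x ↦ diffSymbol (y x) (ξ x) := by
  have hcont : Continuous fun p : E × E ↦ diffSymbol p.1 p.2 := by fun_prop
  exact hcont.measurable.comp (hy.prodMk hξ)

variable [NormedSpace ℂ F]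

lemma memLp_diffSymbol_pow_smul {h : E → F} {p : ℝ≥0∞} (hh : MemLp h p) (y : E) (j : ℕ) :
    MemLp (fun ξ ↦ diffSymbol y ξ ^ j • h ξ) p := by
  refine hh.of_le_mul (c := 2 ^ j) (.smul (by fun_prop) hh.1) (.of_forall fun ξ ↦ ?_)
  rw [norm_smul, norm_pow]
  gcongr
  exact norm_diffSymbol_le_two y ξ

lemma integrable_diffSymbol_pow_smul {h : E → F} (hh : Integrable h) (y : E) (j : ℕ) :
    Integrable fun ξ ↦ diffSymbol y ξ ^ j • h ξ :=
  memLp_one_iff_integrable.1 (memLp_diffSymbol_pow_smul (memLp_one_iff_integrable.2 hh) y j)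

lemma integrable_fourierChar_smul {h : E → F} (hh : Integrable h) (x : E) :
    Integrable fun ξ ↦ 𝐞 ⟪ξ, x⟫ • h ξ := by
  simpa using (Real.fourierIntegral_convergent_iff (-x)).2 hh

lemma fwdDiff_fourierInv {h : E → F} (hh : Integrable h) (y : E) :
    fwdDiff y (𝓕⁻ h) = 𝓕⁻ fun ξ ↦ diffSymbol y ξ • h ξ := by
  funext x
  rw [fwdDiff, Real.fourierInv_eq, Real.fourierInv_eq, Real.fourierInv_eq,
    ← integral_sub (integrable_fourierChar_smul hh _) (integrable_fourierChar_smul hh _)]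
  refine integral_congr_ae (.of_forall fun ξ ↦ ?_)
  simp only [diffSymbol, inner_add_right, AddChar.map_add_eq_mul, Circle.smul_def, Circle.coe_mul,
    real_inner_comm ξ y, smul_smul, ← sub_smul]
  ring_nf

lemma fwdDiff_iter_fourierInv {h : E → F} (hh : Integrable h) (y : E) (j : ℕ) :
    (fwdDiff y)^[j] (𝓕⁻ h) = 𝓕⁻ fun ξ ↦ diffSymbol y ξ ^ j • h ξ := by
  induction j with
  | zero => simp
  | succ j ih =>
    rw [Function.iterate_succ_apply', ih,
      fwdDiff_fourierInv (integrable_diffSymbol_pow_smul hh y j)]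
    simp only [pow_succ', mul_smul]

end Differences

lemma norm_rpow_le_one_add_norm_sq_rpow {E : Type*} [NormedAddCommGroup E] {s r : ℝ}
    (hs : 0 ≤ s) (hsr : s ≤ r) (ξ : E) : ‖ξ‖ ^ s ≤ (1 + ‖ξ‖ ^ 2) ^ (r / 2) :=
  calc ‖ξ‖ ^ s = (‖ξ‖ ^ 2) ^ (s / 2) := by
        rw [← Real.rpow_natCast_mul (norm_nonneg ξ), Nat.cast_ofNat, mul_div_cancel₀ s two_ne_zero]
    _ ≤ (1 + ‖ξ‖ ^ 2) ^ (s / 2) := by gcongr; exact le_add_of_nonneg_left zero_le_one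
    _ ≤ (1 + ‖ξ‖ ^ 2) ^ (r / 2) := by
        gcongr
        exact le_add_of_nonneg_right (by positivity)

lemma memLp_norm_rpow_smul {E F : Type*} [NormedAddCommGroup E] [InnerProductSpace ℝ E]
    [FiniteDimensional ℝ E] [MeasurableSpace E] [BorelSpace E] [NormedAddCommGroup F]
    [NormedSpace ℝ F] {s : ℝ} (hs : 0 ≤ s) (φ : 𝓢(E, F)) (p : ℝ≥0∞) :
    MemLp (fun ξ ↦ ‖ξ‖ ^ s • φ ξ) p := by
  have hweight := Function.hasTemperateGrowth_one_add_norm_sq_rpow E (s / 2)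
  have hdom : MemLp (smulLeftCLM F (fun ξ : E ↦ (1 + ‖ξ‖ ^ 2) ^ (s / 2)) φ) p
      (volume : Measure E) := (smulLeftCLM F _ φ).memLp p
  refine hdom.of_le ?_ (.of_forall fun ξ ↦ ?_)
  · exact ((continuous_norm.rpow_const fun _ ↦ .inr hs).smul φ.continuous).aestronglyMeasurable
  · rw [smulLeftCLM_apply_apply hweight, norm_smul, norm_smul]
    gcongr
    rw [Real.norm_of_nonneg (by positivity)]
    exact (norm_rpow_le_one_add_norm_sq_rpow hs le_rfl ξ).trans (Real.le_norm_self _)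

lemma exists_lintegral_hypersingularKernel_mul_lintegral (E : Type*)
    [NormedAddCommGroup E] [InnerProductSpace ℝ E] [FiniteDimensional ℝ E] [MeasurableSpace E]
    [BorelSpace E] [Nontrivial E] {s : ℝ} {p : ℕ} (hs : 0 < s) (hsp : s < p) :
    ∃ c : ℝ, ∀ w : E → ℝ≥0∞, Measurable w →
      ∫⁻ y, ENNReal.ofReal (hypersingularKernel s y)
          * ∫⁻ ξ, ENNReal.ofReal (‖diffSymbol y ξ‖ ^ p) * w ξ
        = ENNReal.ofReal c * ∫⁻ ξ, ENNReal.ofReal (‖ξ‖ ^ s) * w ξ := by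
  obtain ⟨c, hc, hker⟩ := exists_integral_hypersingularKernel_mul_norm_diffSymbol_pow E hs hsp
  refine ⟨c, fun w hw ↦ ?_⟩
  have hinner (ξ : E) : ∫⁻ y, ENNReal.ofReal (hypersingularKernel s y)
      * ENNReal.ofReal (‖diffSymbol y ξ‖ ^ p) = ENNReal.ofReal c * ENNReal.ofReal (‖ξ‖ ^ s) := by
    have hnn (y : E) := hypersingularKernel_nonneg s y
    simp only [← ENNReal.ofReal_mul (hnn _)]
    rw [← ENNReal.ofReal_mul hc.le, ← hker ξ, ofReal_integral_eq_lintegral_ofReal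
      (integrable_hypersingularKernel_mul_norm_diffSymbol_pow hs hsp ξ)
      (.of_forall fun y ↦ mul_nonneg (hnn y) (by positivity))]
  calc ∫⁻ y, ENNReal.ofReal (hypersingularKernel s y)
          * ∫⁻ ξ, ENNReal.ofReal (‖diffSymbol y ξ‖ ^ p) * w ξ
      = ∫⁻ y, ∫⁻ ξ, ENNReal.ofReal (hypersingularKernel s y)
          * (ENNReal.ofReal (‖diffSymbol y ξ‖ ^ p) * w ξ) :=
        lintegral_congr fun y ↦ (lintegral_const_mul _ (by fun_prop)).symm
    _ = ∫⁻ ξ, ∫⁻ y, ENNReal.ofReal (hypersingularKernel s y)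
          * (ENNReal.ofReal (‖diffSymbol y ξ‖ ^ p) * w ξ) :=
        lintegral_lintegral_swap (by fun_prop)
    _ = ∫⁻ ξ, ENNReal.ofReal c * (ENNReal.ofReal (‖ξ‖ ^ s) * w ξ) := by
        refine lintegral_congr fun ξ ↦ ?_
        simp only [← mul_assoc]
        rw [lintegral_mul_const _ (by fun_prop), hinner]
    _ = ENNReal.ofReal c * ∫⁻ ξ, ENNReal.ofReal (‖ξ‖ ^ s) * w ξ :=
        lintegral_const_mul _ (by fun_prop)

section SchwartzDifferences

variable {E : Type*} [NormedAddCommGroup E] [InnerProductSpace ℝ E] [FiniteDimensional ℝ E]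
  [MeasurableSpace E] [BorelSpace E]
variable {F : Type*} [NormedAddCommGroup F] [NormedSpace ℂ F] [CompleteSpace F]

lemma fourierInv_fourier_coe (u : 𝓢(E, F)) : 𝓕⁻ ⇑(𝓕 u : 𝓢(E, F)) = u := by
  rw [← fourierInv_coe, fourierInv_fourier_eq]

lemma fwdDiff_iter_schwartzMap (j : ℕ) (u : 𝓢(E, F)) (y : E) :
    (fwdDiff y)^[j] u = 𝓕⁻ fun ξ ↦ diffSymbol y ξ ^ j • 𝓕 u ξ := by
  rw [← fwdDiff_iter_fourierInv (𝓕 u).integrable, fourierInv_fourier_coe]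

end SchwartzDifferences

lemma sq_eLpNorm_two {α G : Type*} [MeasurableSpace α] [NormedAddCommGroup G] (f : α → G)
    (μ : Measure α) : eLpNorm f 2 μ ^ 2 = ∫⁻ x, ‖f x‖ₑ ^ 2 ∂μ := by
  simpa using eLpNorm_nnreal_pow_eq_lintegral (p := 2) (f := f) (μ := μ) two_ne_zero

section SobolevNorms

variable {E : Type*} [NormedAddCommGroup E] [InnerProductSpace ℝ E] [FiniteDimensional ℝ E]
  [MeasurableSpace E] [BorelSpace E]
variable {F : Type*} [NormedAddCommGroup F]

/-- The `L²` norm of the `j`-th difference of `u` with step `y`. -/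
def diffNorm (j : ℕ) (u : E → F) (y : E) : ℝ≥0∞ := eLpNorm ((fwdDiff y)^[j] u) 2 volume

/-- The homogeneous Sobolev norm `‖|ξ|^s û‖_{L²}`, with Mathlib's normalisation of `𝓕`. -/
def homSobolevNorm [NormedSpace ℂ F] (s : ℝ) (u : E → F) : ℝ≥0∞ :=
  eLpNorm (fun ξ ↦ ‖ξ‖ ^ s • 𝓕 u ξ) 2 volume

/-- The inhomogeneous Sobolev norm `‖⟨ξ⟩^s û‖_{L²}`, with Mathlib's normalisation of `𝓕`. -/
def sobolevNorm [NormedSpace ℂ F] (s : ℝ) (u : E → F) : ℝ≥0∞ :=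
  eLpNorm (fun ξ ↦ (1 + ‖ξ‖ ^ 2) ^ (s / 2) • 𝓕 u ξ) 2 volume

lemma homSobolevNorm_le_sobolevNorm [NormedSpace ℂ F] {s r : ℝ} (hs : 0 ≤ s) (hsr : s ≤ r)
    (u : E → F) : homSobolevNorm s u ≤ sobolevNorm r u := by
  refine eLpNorm_mono fun ξ ↦ ?_
  rw [norm_smul, norm_smul, Real.norm_of_nonneg (by positivity),
    Real.norm_of_nonneg (by positivity)]
  gcongr
  exact norm_rpow_le_one_add_norm_sq_rpow hs hsr ξ

variable [InnerProductSpace ℂ F] [CompleteSpace F]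

lemma diffNorm_eq_eLpNorm_diffSymbol (j : ℕ) (u : 𝓢(E, F)) (y : E) :
    diffNorm j u y = eLpNorm (fun ξ ↦ diffSymbol y ξ ^ j • 𝓕 u ξ) 2 volume := by
  rw [diffNorm, fwdDiff_iter_schwartzMap]
  exact eLpNorm_fourierInv (integrable_diffSymbol_pow_smul (𝓕 u).integrable y j)
    (memLp_diffSymbol_pow_smul ((𝓕 u).memLp 2) y j)

lemma diffNorm_succ_le (j : ℕ) (u : 𝓢(E, F)) (y : E) :
    diffNorm (j + 1) u y ≤ 2 * diffNorm j u y := by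
  have hpt (ξ : E) : ‖diffSymbol y ξ ^ (j + 1) • 𝓕 u ξ‖ ≤ 2 * ‖diffSymbol y ξ ^ j • 𝓕 u ξ‖ := by
    rw [pow_succ', mul_smul, norm_smul]
    gcongr
    exact norm_diffSymbol_le_two y ξ
  simpa [diffNorm_eq_eLpNorm_diffSymbol] using
    eLpNorm_le_mul_eLpNorm_of_ae_le_mul (.of_forall hpt) 2

lemma diffNorm_one_nsmul_le (k : ℕ) (u : 𝓢(E, F)) (y : E) :
    diffNorm 1 u (k • y) ≤ k * diffNorm 1 u y := by
  have hpt (ξ : E) : ‖diffSymbol (k • y) ξ • 𝓕 u ξ‖ ≤ k * ‖diffSymbol y ξ • 𝓕 u ξ‖ := by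
    rw [norm_smul, norm_smul, ← mul_assoc]
    gcongr
    exact norm_diffSymbol_nsmul_le k y ξ
  simpa [diffNorm_eq_eLpNorm_diffSymbol] using
    eLpNorm_le_mul_eLpNorm_of_ae_le_mul (.of_forall hpt) 2

lemma sq_diffNorm (j : ℕ) (u : 𝓢(E, F)) (y : E) :
    diffNorm j u y ^ 2 = ∫⁻ ξ, ENNReal.ofReal (‖diffSymbol y ξ‖ ^ (2 * j)) * ‖𝓕 u ξ‖ₑ ^ 2 := by
  rw [diffNorm_eq_eLpNorm_diffSymbol, sq_eLpNorm_two]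
  refine lintegral_congr fun ξ ↦ ?_
  rw [enorm_smul, enorm_pow, mul_pow, ← pow_mul, mul_comm j, ← ofReal_norm,
    ENNReal.ofReal_pow (norm_nonneg _)]

@[fun_prop]
lemma measurable_diffNorm (j : ℕ) (u : 𝓢(E, F)) : Measurable (diffNorm j u) := by
  have hsq : Measurable fun y ↦ diffNorm j u y ^ 2 := by
    simp only [sq_diffNorm]
    have hu : Measurable fun p : E × E ↦ ‖𝓕 u p.2‖ₑ :=
      ((𝓕 u).continuous.comp continuous_snd).enorm.measurable
    exact Measurable.lintegral_prod_right' (f := fun p : E × E ↦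
      ENNReal.ofReal (‖diffSymbol p.1 p.2‖ ^ (2 * j)) * ‖𝓕 u p.2‖ₑ ^ 2)
      (.mul (by fun_prop) (hu.pow_const 2))
  simpa only [ENNReal.pow_rpow_inv_natCast two_ne_zero] using hsq.pow_const ((2 : ℕ) : ℝ)⁻¹

theorem exists_lintegral_hypersingularKernel_mul_sq_diffNorm (E F : Type*)
    [NormedAddCommGroup E] [InnerProductSpace ℝ E] [FiniteDimensional ℝ E] [MeasurableSpace E]
    [BorelSpace E] [Nontrivial E] [NormedAddCommGroup F] [InnerProductSpace ℂ F]
    [CompleteSpace F] {s : ℝ} {j : ℕ} (hs : 0 < s) (hsj : s < j) :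
    ∃ c : ℝ, ∀ u : 𝓢(E, F),
      ∫⁻ y, ENNReal.ofReal (hypersingularKernel (2 * s) y) * diffNorm j u y ^ 2
        = ENNReal.ofReal c * homSobolevNorm s u ^ 2 := by
  obtain ⟨c, hc⟩ := exists_lintegral_hypersingularKernel_mul_lintegral E (p := 2 * j)
    (mul_pos two_pos hs) (by push_cast; linarith)
  refine ⟨c, fun u ↦ ?_⟩
  simp only [sq_diffNorm]
  rw [hc _ ((𝓕 u).continuous.enorm.measurable.pow_const 2), homSobolevNorm, sq_eLpNorm_two]
  congr 1
  refine lintegral_congr fun ξ ↦ ?_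
  rw [enorm_smul, mul_pow, Real.enorm_of_nonneg (by positivity),
    ← ENNReal.ofReal_pow (by positivity), ← Real.rpow_mul_natCast (norm_nonneg ξ),
    Nat.cast_ofNat, mul_comm s, fourier_coe]

end SobolevNorms

lemma lintegral_hypersingularKernel_mul_le {E : Type*} [NormedAddCommGroup E]
    [InnerProductSpace ℝ E] [FiniteDimensional ℝ E] [MeasurableSpace E] [BorelSpace E] {s t : ℝ}
    (hst : 0 < s + t) {a b : E → ℝ≥0∞} (ha : Measurable a) (hb : Measurable b) :
    ∫⁻ y, ENNReal.ofReal (hypersingularKernel (s + t) y) * (a y * b y)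
      ≤ (∫⁻ y, ENNReal.ofReal (hypersingularKernel (2 * s) y) * a y ^ 2) ^ (1 / 2 : ℝ)
        * (∫⁻ y, ENNReal.ofReal (hypersingularKernel (2 * t) y) * b y ^ 2) ^ (1 / 2 : ℝ) := by
  have hsplit (y : E) : ENNReal.ofReal (hypersingularKernel (s + t) y) * (a y * b y)
      = ENNReal.ofReal √(hypersingularKernel (2 * s) y) * a y
        * (ENNReal.ofReal √(hypersingularKernel (2 * t) y) * b y) := by
    rw [← sqrt_hypersingularKernel_mul_sqrt hst, ENNReal.ofReal_mul (Real.sqrt_nonneg _)]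
    ring
  have hCS := ENNReal.lintegral_mul_le_Lp_mul_Lq volume Real.HolderConjugate.two_two
    (f := fun y : E ↦ ENNReal.ofReal √(hypersingularKernel (2 * s) y) * a y)
    (g := fun y ↦ ENNReal.ofReal √(hypersingularKernel (2 * t) y) * b y)
    (by fun_prop) (by fun_prop)
  simpa only [Pi.mul_apply, ← hsplit, ENNReal.rpow_two,
    sq_ofReal_sqrt_hypersingularKernel_mul] using hCS

theorem exists_lintegral_hypersingularKernel_mul_diffNorm_mul_diffNorm_le (E F G : Type*)
    [NormedAddCommGroup E] [InnerProductSpace ℝ E] [FiniteDimensional ℝ E] [MeasurableSpace E]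
    [BorelSpace E] [Nontrivial E] [NormedAddCommGroup F] [InnerProductSpace ℂ F]
    [CompleteSpace F] [NormedAddCommGroup G] [InnerProductSpace ℂ G] [CompleteSpace G]
    {s t : ℝ} {i j : ℕ} (hs : 0 < s) (hsi : s < i) (ht : 0 < t) (htj : t < j) :
    ∃ C : ℝ, ∀ (f : 𝓢(E, F)) (g : 𝓢(E, G)),
      ∫⁻ y, ENNReal.ofReal (hypersingularKernel (s + t) y) * (diffNorm i f y * diffNorm j g y)
        ≤ ENNReal.ofReal C * (homSobolevNorm s f * homSobolevNorm t g) := by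
  obtain ⟨c, hc⟩ := exists_lintegral_hypersingularKernel_mul_sq_diffNorm E F hs hsi
  obtain ⟨c', hc'⟩ := exists_lintegral_hypersingularKernel_mul_sq_diffNorm E G ht htj
  have hroot (c : ℝ) (N : ℝ≥0∞) :
      (ENNReal.ofReal c * N ^ 2) ^ (1 / 2 : ℝ) = ENNReal.ofReal c ^ (1 / 2 : ℝ) * N := by
    rw [ENNReal.mul_rpow_of_nonneg _ _ one_half_pos.le, ← ENNReal.rpow_two, ← ENNReal.rpow_mul,
      mul_one_div_cancel two_ne_zero, ENNReal.rpow_one]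
  have hfin (c : ℝ) : ENNReal.ofReal c ^ (1 / 2 : ℝ) ≠ ⊤ :=
    ENNReal.rpow_ne_top_of_nonneg one_half_pos.le ENNReal.ofReal_ne_top
  refine ⟨(ENNReal.ofReal c ^ (1 / 2 : ℝ) * ENNReal.ofReal c' ^ (1 / 2 : ℝ)).toReal,
    fun f g ↦ ?_⟩
  refine (lintegral_hypersingularKernel_mul_le (add_pos hs ht) (by fun_prop)
    (by fun_prop)).trans_eq ?_
  rw [hc f, hc' g, hroot, hroot, ENNReal.ofReal_toReal (ENNReal.mul_ne_top (hfin c) (hfin c'))]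
  ring


section CentralDiff

variable {E : Type*} [NormedAddCommGroup E] [InnerProductSpace ℝ E]
variable {F : Type*} [NormedAddCommGroup F]

/-- The centred difference `(-1)^k Δ_y^{2k} u (x - k y)` of order `2k`. The sign and the shift make
its symbol `|e^{2πi⟪y,ξ⟫} - 1|^{2k}` nonnegative. -/
def centralDiff (k : ℕ) (y : E) (u : E → F) (x : E) : F :=
  (-1 : ℤ) ^ k • (fwdDiff y)^[2 * k] u (x - k • y)

lemma neg_fourierChar_mul_sq_diffSymbol (y ξ : E) :
    -(𝐞 ⟪ξ, -y⟫ : ℂ) * diffSymbol y ξ ^ 2 = ‖diffSymbol y ξ‖ ^ 2 := by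
  rw [← Complex.mul_conj', diffSymbol, inner_neg_right, AddChar.map_neg_eq_inv,
    real_inner_comm y ξ, map_sub, map_one, ← Circle.coe_inv_eq_conj, Circle.coe_inv]
  field_simp [Circle.coe_ne_zero]
  ring

variable [FiniteDimensional ℝ E] [MeasurableSpace E] [BorelSpace E]

/-- The fractional derivative `(-Δ)^{s/2} u`, up to the factor `(2π)^s`: the Fourier multiplier
`|ξ|^s` in Mathlib's normalisation of `𝓕`. -/
def rieszDeriv [NormedSpace ℂ F] (s : ℝ) (u : E → F) : E → F :=
  𝓕⁻ fun ξ ↦ ‖ξ‖ ^ s • 𝓕 u ξ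

lemma centralDiff_fourierInv [NormedSpace ℂ F] {h : E → F} (hh : Integrable h) (k : ℕ) (y : E) :
    centralDiff k y (𝓕⁻ h) = 𝓕⁻ fun ξ ↦ ‖diffSymbol y ξ‖ ^ (2 * k) • h ξ := by
  funext x
  rw [centralDiff, fwdDiff_iter_fourierInv hh, Real.fourierInv_eq, Real.fourierInv_eq,
    ← Int.cast_smul_eq_zsmul ℂ, ← integral_smul]
  refine integral_congr_ae (.of_forall fun ξ ↦ ?_)
  have hshift : (𝐞 ⟪ξ, x - k • y⟫ : ℂ) = 𝐞 ⟪ξ, x⟫ * (𝐞 ⟪ξ, -y⟫ : ℂ) ^ k := by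
    rw [sub_eq_add_neg, ← smul_neg, inner_add_right, ← Nat.cast_smul_eq_nsmul ℝ,
      real_inner_smul_right, ← nsmul_eq_mul, AddChar.map_add_eq_mul, AddChar.map_nsmul_eq_pow,
      Circle.coe_mul, Circle.coe_pow]
  have hsymbol : (-1 : ℂ) ^ k * (𝐞 ⟪ξ, -y⟫ : ℂ) ^ k * diffSymbol y ξ ^ (2 * k)
      = (‖diffSymbol y ξ‖ ^ (2 * k) : ℝ) := by
    rw [pow_mul, ← mul_pow, ← mul_pow, neg_one_mul, neg_fourierChar_mul_sq_diffSymbol, ← pow_mul]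
    norm_cast
  simp only [Circle.smul_def, ← Complex.coe_smul, smul_smul, hshift, ← hsymbol]
  push_cast
  ring_nf

lemma integrable_norm_rpow_smul_fourier [NormedSpace ℂ F] {s : ℝ} (hs : 0 ≤ s) (u : 𝓢(E, F)) :
    Integrable fun ξ ↦ ‖ξ‖ ^ s • 𝓕 u ξ :=
  memLp_one_iff_integrable.1 (memLp_norm_rpow_smul hs (𝓕 u) 1)

lemma continuous_rieszDeriv [NormedSpace ℂ F] {s : ℝ} (hs : 0 ≤ s) (u : 𝓢(E, F)) :
    Continuous (rieszDeriv s u) :=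
  continuous_fourierInv_of_integrable (integrable_norm_rpow_smul_fourier hs u)

lemma eLpNorm_rieszDeriv [InnerProductSpace ℂ F] [CompleteSpace F] {s : ℝ} (hs : 0 ≤ s)
    (u : 𝓢(E, F)) : eLpNorm (rieszDeriv s u) 2 = homSobolevNorm s u :=
  eLpNorm_fourierInv (integrable_norm_rpow_smul_fourier hs u) (memLp_norm_rpow_smul hs (𝓕 u) 2)

lemma integrable_prod_hypersingularKernel_smul [NormedSpace ℝ F] [Nontrivial E] {s : ℝ} {p : ℕ}
    (hs : 0 < s) (hsp : s < p) {h : E → F} (hm : AEStronglyMeasurable h)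
    (hh : Integrable fun ξ ↦ ‖ξ‖ ^ s • h ξ) :
    Integrable (Function.uncurry fun y ξ ↦
      (hypersingularKernel s y * ‖diffSymbol y ξ‖ ^ p) • h ξ) (volume.prod volume) := by
  obtain ⟨c, -, hker⟩ := exists_integral_hypersingularKernel_mul_norm_diffSymbol_pow E hs hsp
  have hmeas : AEStronglyMeasurable (Function.uncurry fun (y ξ : E) ↦
      (hypersingularKernel s y * ‖diffSymbol y ξ‖ ^ p) • h ξ) (volume.prod volume) := by
    refine .smul (Measurable.aestronglyMeasurable ?_) hm.comp_snd
    fun_prop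
  refine (integrable_prod_iff' hmeas).2 ⟨.of_forall fun ξ ↦ ?_, ?_⟩
  · exact (integrable_hypersingularKernel_mul_norm_diffSymbol_pow hs hsp ξ).smul_const (h ξ)
  · refine (hh.norm.const_mul c).congr (.of_forall fun ξ ↦ ?_)
    have hnn (y : E) := hypersingularKernel_nonneg s y
    simp only [Function.uncurry_apply_pair, norm_smul, norm_mul, norm_pow, norm_norm,
      Real.norm_of_nonneg (hnn _), integral_mul_const, hker]
    rw [Real.norm_of_nonneg (by positivity), mul_assoc]

theorem exists_integral_hypersingularKernel_smul_centralDiff (E F : Type*)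
    [NormedAddCommGroup E] [InnerProductSpace ℝ E] [FiniteDimensional ℝ E] [MeasurableSpace E]
    [BorelSpace E] [Nontrivial E] [NormedAddCommGroup F] [NormedSpace ℂ F] [CompleteSpace F]
    {s : ℝ} {k : ℕ} (hs : 0 < s) (hsk : s < 2 * k) :
    ∃ c : ℝ, 0 < c ∧ ∀ (u : 𝓢(E, F)) (x : E),
      Integrable (fun y ↦ hypersingularKernel s y • centralDiff k y u x) ∧
      ∫ y, hypersingularKernel s y • centralDiff k y u x = c • rieszDeriv s u x := by
  have hsk' : s < (2 * k : ℕ) := by exact_mod_cast hsk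
  obtain ⟨c, hc, hker⟩ := exists_integral_hypersingularKernel_mul_norm_diffSymbol_pow E hs hsk'
  refine ⟨c, hc, fun u x ↦ ?_⟩
  have hint := integrable_prod_hypersingularKernel_smul hs hsk' (h := fun ξ ↦ 𝐞 ⟪ξ, x⟫ • 𝓕 u ξ)
    (by fun_prop) ((integrable_fourierChar_smul (integrable_norm_rpow_smul_fourier hs.le u)
      x).congr (.of_forall fun ξ ↦ smul_comm _ _ _))
  have hdiff (y : E) : ∫ ξ, (hypersingularKernel s y * ‖diffSymbol y ξ‖ ^ (2 * k))
      • 𝐞 ⟪ξ, x⟫ • 𝓕 u ξ = hypersingularKernel s y • centralDiff k y u x := by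
    rw [← fourierInv_fourier_coe u, centralDiff_fourierInv (𝓕 u).integrable, Real.fourierInv_eq,
      ← integral_smul]
    refine integral_congr_ae (.of_forall fun ξ ↦ ?_)
    simp only [mul_smul, smul_comm (𝐞 ⟪ξ, x⟫)]
  constructor
  · exact hint.integral_prod_left.congr (.of_forall hdiff)
  · simp only [← hdiff]
    rw [integral_integral_swap hint, rieszDeriv, Real.fourierInv_eq, ← integral_smul]
    refine integral_congr_ae (.of_forall fun ξ ↦ ?_)
    dsimp only
    rw [integral_smul_const, hker, mul_smul, smul_comm (𝐞 ⟪ξ, x⟫), fourier_coe]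

end CentralDiff

section Defect

/-- The defect of the product rule `fg ↦ f · + · g` for the centred difference of order `2k`. -/
def leibnizDefect {E R : Type*} [NormedAddCommGroup E] [NormedRing R] (k : ℕ) (y : E) (f g : E → R)
    (x : E) : R :=
  centralDiff k y (f * g) x - f x * centralDiff k y g x - centralDiff k y f x * g x

lemma fwdDiff_iter_two_mul_mul {M R : Type*} [AddCommGroup M] [Ring R] (h : M) (f g : M → R)
    {k : ℕ} (hk : k ≠ 0) (z : M) :
    (fwdDiff h)^[2 * k] (f * g) z
      = f (z + (2 * k) • h) * (fwdDiff h)^[2 * k] g z + (fwdDiff h)^[2 * k] f z * g z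
        + ∑ i ∈ Finset.Ico 1 (2 * k), (2 * k).choose i •
          ((fwdDiff h)^[i] f (z + (2 * k - i) • h) * (fwdDiff h)^[2 * k - i] g z) := by
  rw [fwdDiff_iter_mul, Finset.sum_apply, Finset.Nat.sum_antidiagonal_eq_sum_range_succ_mk,
    Finset.sum_range_succ, Finset.range_eq_Ico, Finset.sum_eq_sum_Ico_succ_bot (by lia)]
  simp only [Pi.smul_apply, Nat.choose_zero_right, Nat.choose_self, one_smul, Nat.sub_self,
    zero_smul, add_zero, Nat.sub_zero, Function.iterate_zero_apply, Nat.reduceAdd]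
  abel

lemma leibnizDefect_add_nsmul {E R : Type*} [NormedAddCommGroup E] [NormedRing R] {k : ℕ}
    (hk : k ≠ 0) (y : E) (f g : E → R) (z : E) :
    leibnizDefect k y f g (z + k • y) = (-1 : ℤ) ^ k •
      (fwdDiff (k • y) f (z + k • y) * (fwdDiff y)^[2 * k] g z
        - (fwdDiff y)^[2 * k] f z * fwdDiff (k • y) g z
        + ∑ i ∈ Finset.Ico 1 (2 * k), (2 * k).choose i •
          ((fwdDiff y)^[i] f (z + (2 * k - i) • y) * (fwdDiff y)^[2 * k - i] g z)) := by
  simp only [leibnizDefect, centralDiff, add_sub_cancel_right, fwdDiff_iter_two_mul_mul y f g hk,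
    fwdDiff, add_assoc, ← two_nsmul, ← mul_smul, mul_smul_comm, smul_mul_assoc, ← smul_sub]
  congr 1
  noncomm_ring

end Defect

section Continuity

variable {E : Type*} [NormedAddCommGroup E]

@[fun_prop]
lemma continuous_fwdDiff_iter {X F : Type*} [TopologicalSpace X] [NormedAddCommGroup F]
    {u : E → F} (hu : Continuous u) (j : ℕ) {y x : X → E} (hy : Continuous y)
    (hx : Continuous x) : Continuous fun t ↦ (fwdDiff (y t))^[j] u (x t) := by
  simp only [fwdDiff_iter_eq_sum_shift]
  fun_prop

lemma continuous_leibnizDefect {R : Type*} [NormedRing R] {f g : E → R} (hf : Continuous f)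
    (hg : Continuous g) (k : ℕ) : Continuous fun p : E × E ↦ leibnizDefect k p.1 f g p.2 := by
  have : Continuous (f * g) := hf.mul hg
  simp only [leibnizDefect, centralDiff]
  fun_prop

end Continuity

section Translation

lemma eLpNorm_one_mul_le {α R : Type*} [MeasurableSpace α] [NormedRing R] {μ : Measure α}
    {u v : α → R} (hu : AEStronglyMeasurable u μ) (hv : AEStronglyMeasurable v μ) :
    eLpNorm (fun x ↦ u x * v x) 1 μ ≤ eLpNorm u 2 μ * eLpNorm v 2 μ := by
  simpa only [smul_eq_mul, Pi.mul_def] using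
    eLpNorm_smul_le_mul_eLpNorm (p := 2) (q := 2) (r := 1) hv hu

variable {G : Type*} [AddGroup G] [MeasurableSpace G] [MeasurableAdd G] {μ : Measure G}
  [μ.IsAddRightInvariant]

lemma eLpNorm_comp_add_right {F : Type*} [NormedAddCommGroup F] {u : G → F}
    (hu : AEStronglyMeasurable u μ) (p : ℝ≥0∞) (a : G) :
    eLpNorm (fun x ↦ u (x + a)) p μ = eLpNorm u p μ :=
  eLpNorm_comp_measurePreserving hu (measurePreserving_add_right μ a)

lemma eLpNorm_one_mul_comp_add_right_le {R : Type*} [NormedRing R] {u v : G → R}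
    (hu : AEStronglyMeasurable u μ) (hv : AEStronglyMeasurable v μ) (a : G) :
    eLpNorm (fun x ↦ u (x + a) * v x) 1 μ ≤ eLpNorm u 2 μ * eLpNorm v 2 μ := by
  rw [← eLpNorm_comp_add_right hu 2 a]
  exact eLpNorm_one_mul_le (hu.comp_measurePreserving (measurePreserving_add_right μ a)) hv

end Translation

section DefectBound

variable {E : Type*} [NormedAddCommGroup E] [InnerProductSpace ℝ E] [FiniteDimensional ℝ E]
  [MeasurableSpace E] [BorelSpace E]

lemma aestronglyMeasurable_fwdDiff_iter {F : Type*} [NormedAddCommGroup F] [NormedSpace ℝ F]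
    (u : 𝓢(E, F)) (i : ℕ) (y : E) : AEStronglyMeasurable ((fwdDiff y)^[i] u) :=
  (by fun_prop : Continuous ((fwdDiff y)^[i] u)).aestronglyMeasurable

lemma eLpNorm_one_fwdDiff_mul_fwdDiff_iter_le (k j : ℕ) (f g : 𝓢(E, ℂ)) (y a : E) :
    eLpNorm (fun z ↦ fwdDiff (k • y) f (z + a) * (fwdDiff y)^[j + 1] g z) 1 volume
      ≤ ↑(2 * k) * (diffNorm 1 f y * diffNorm j g y) :=
  calc eLpNorm (fun z ↦ fwdDiff (k • y) f (z + a) * (fwdDiff y)^[j + 1] g z) 1 volume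
      ≤ diffNorm 1 f (k • y) * diffNorm (j + 1) g y :=
        eLpNorm_one_mul_comp_add_right_le (aestronglyMeasurable_fwdDiff_iter f 1 _)
          (aestronglyMeasurable_fwdDiff_iter g _ y) a
    _ ≤ (k * diffNorm 1 f y) * (2 * diffNorm j g y) :=
        mul_le_mul' (diffNorm_one_nsmul_le k f y) (diffNorm_succ_le j g y)
    _ = ↑(2 * k) * (diffNorm 1 f y * diffNorm j g y) := by push_cast; ring

lemma eLpNorm_one_sum_fwdDiff_iter_mul_le (m : ℕ) (f g : 𝓢(E, ℂ)) (y : E) :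
    eLpNorm (fun z ↦ ∑ i ∈ Finset.Ico 1 m, m.choose i •
        ((fwdDiff y)^[i] f (z + (m - i) • y) * (fwdDiff y)^[m - i] g z)) 1 volume
      ≤ ∑ i ∈ Finset.Ico 1 m, m.choose i * (diffNorm i f y * diffNorm (m - i) g y) := by
  let T (i : ℕ) : E → ℂ := fun z ↦ m.choose i •
    ((fwdDiff y)^[i] f (z + (m - i) • y) * (fwdDiff y)^[m - i] g z)
  have hTm (i : ℕ) : AEStronglyMeasurable (T i) :=
    (by fun_prop : Continuous (T i)).aestronglyMeasurable
  have hT (i : ℕ) : eLpNorm (T i) 1 volume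
      ≤ m.choose i * (diffNorm i f y * diffNorm (m - i) g y) :=
    (eLpNorm_nsmul _ _).trans_le <| mul_le_mul_right
      (eLpNorm_one_mul_comp_add_right_le (aestronglyMeasurable_fwdDiff_iter f i y)
        (aestronglyMeasurable_fwdDiff_iter g _ y) _) _
  rw [show (fun z ↦ ∑ i ∈ Finset.Ico 1 m, T i z) = ∑ i ∈ Finset.Ico 1 m, T i from
    (Finset.sum_fn _ _).symm]
  exact (eLpNorm_sum_le (fun i _ ↦ hTm i) le_rfl).trans (Finset.sum_le_sum fun i _ ↦ hT i)

lemma eLpNorm_leibnizDefect_le_add {R : Type*} [NormedRing R] [SecondCountableTopologyEither E R]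
    {k : ℕ} (hk : k ≠ 0) {f g : E → R} (hf : Continuous f) (hg : Continuous g) (y : E) :
    eLpNorm (leibnizDefect k y f g) 1 volume
      ≤ eLpNorm (fun z ↦ fwdDiff (k • y) f (z + k • y) * (fwdDiff y)^[2 * k] g z) 1 volume
        + eLpNorm (fun z ↦ (fwdDiff y)^[2 * k] f z * fwdDiff (k • y) g z) 1 volume
        + eLpNorm (fun z ↦ ∑ i ∈ Finset.Ico 1 (2 * k), (2 * k).choose i •
          ((fwdDiff y)^[i] f (z + (2 * k - i) • y) * (fwdDiff y)^[2 * k - i] g z)) 1 volume := by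
  have hdef : Continuous (leibnizDefect k y f g) :=
    (continuous_leibnizDefect hf hg k).comp (.prodMk_right y)
  have hu (h : E) : Continuous (fwdDiff h f) := by unfold fwdDiff; fun_prop
  have hv (h : E) : Continuous (fwdDiff h g) := by unfold fwdDiff; fun_prop
  rw [← eLpNorm_comp_add_right hdef.aestronglyMeasurable 1 (k • y),
    show (fun z ↦ leibnizDefect k y f g (z + k • y)) = _ from
      funext (leibnizDefect_add_nsmul hk y f g)]
  have hsign (u : E → R) :
      eLpNorm (fun z ↦ (-1 : ℤ) ^ k • u z) 1 volume = eLpNorm u 1 volume := by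
    refine eLpNorm_congr_norm_ae (.of_forall fun z ↦ ?_)
    obtain h | h := neg_one_pow_eq_or ℤ k <;> simp only [h, one_smul, neg_smul, norm_neg]
  rw [hsign]
  refine (eLpNorm_add_le ?_ ?_ le_rfl).trans (add_le_add_left (eLpNorm_sub_le ?_ ?_ le_rfl) _) <;>
  · refine Continuous.aestronglyMeasurable ?_
    fun_prop

theorem eLpNorm_leibnizDefect_le {k : ℕ} (hk : k ≠ 0) (f g : 𝓢(E, ℂ)) (y : E) :
    eLpNorm (leibnizDefect k y f g) 1 volume ≤ 3 * ∑ i ∈ Finset.Ico 1 (2 * k),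
      (2 * k).choose i * (diffNorm i f y * diffNorm (2 * k - i) g y) := by
  set b : ℕ → ℝ≥0∞ := fun i ↦ (2 * k).choose i * (diffNorm i f y * diffNorm (2 * k - i) g y)
    with hb
  have hle {i : ℕ} (hi : i ∈ Finset.Ico 1 (2 * k)) : b i ≤ ∑ i ∈ Finset.Ico 1 (2 * k), b i :=
    Finset.single_le_sum (fun _ _ ↦ zero_le) hi
  have hend (u v : 𝓢(E, ℂ)) (a : E) :
      eLpNorm (fun z ↦ fwdDiff (k • y) u (z + a) * (fwdDiff y)^[2 * k] v z) 1 volume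
        ≤ ↑(2 * k) * (diffNorm 1 u y * diffNorm (2 * k - 1) v y) := by
    have h := eLpNorm_one_fwdDiff_mul_fwdDiff_iter_le k (2 * k - 1) u v y a
    rwa [Nat.sub_add_cancel (by lia)] at h
  have hfirst : eLpNorm (fun z ↦ fwdDiff (k • y) f (z + k • y) * (fwdDiff y)^[2 * k] g z) 1 volume
      ≤ b 1 := by
    simpa only [hb, Nat.choose_one_right] using hend f g (k • y)
  have hlast : eLpNorm (fun z ↦ (fwdDiff y)^[2 * k] f z * fwdDiff (k • y) g z) 1 volume
      ≤ b (2 * k - 1) := by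
    have hsub : 2 * k - (2 * k - 1) = 1 := by lia
    have hchoose : (2 * k).choose (2 * k - 1) = 2 * k := by
      rw [Nat.choose_symm (by lia), Nat.choose_one_right]
    have h := hend g f 0
    simp only [add_zero, mul_comm (fwdDiff (k • y) g _), mul_comm (diffNorm 1 g y)] at h
    simpa only [hb, hsub, hchoose] using h
  refine (eLpNorm_leibnizDefect_le_add hk f.continuous g.continuous y).trans ?_
  refine (add_le_add (add_le_add hfirst hlast)
    (eLpNorm_one_sum_fwdDiff_iter_mul_le (2 * k) f g y)).trans ?_
  have h1 := hle (i := 1) (by rw [Finset.mem_Ico]; lia)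
  have h2 := hle (i := 2 * k - 1) (by rw [Finset.mem_Ico]; lia)
  refine (add_le_add_left (add_le_add h1 h2) _).trans_eq ?_
  ring

end DefectBound

section DefectIntegral

variable (E : Type*) [NormedAddCommGroup E] [InnerProductSpace ℝ E] [FiniteDimensional ℝ E]
  [MeasurableSpace E] [BorelSpace E] [Nontrivial E]

-- The smoothness `β` is split in proportion to the orders `i` and `m - i` of the differences.
lemma exists_lintegral_hypersingularKernel_mul_diffNorm_mul_diffNorm_sub_le (F G : Type*)
    [NormedAddCommGroup F] [InnerProductSpace ℂ F] [CompleteSpace F] [NormedAddCommGroup G]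
    [InnerProductSpace ℂ G] [CompleteSpace G] {β : ℝ} {m i : ℕ} (hβ : 0 < β) (hβm : β < m)
    (hi : i ∈ Finset.Ico 1 m) :
    ∃ C : ℝ, ∀ (f : 𝓢(E, F)) (g : 𝓢(E, G)),
      ∫⁻ y, ENNReal.ofReal (hypersingularKernel β y) * (diffNorm i f y * diffNorm (m - i) g y)
        ≤ ENNReal.ofReal C * (sobolevNorm β f * sobolevNorm β g) := by
  obtain ⟨hi1, him⟩ := Finset.mem_Ico.1 hi
  have hi' : (0 : ℝ) < i := by exact_mod_cast hi1
  have hj' : (0 : ℝ) < (m - i : ℕ) := by exact_mod_cast Nat.sub_pos_of_lt him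
  have hm : (0 : ℝ) < m := hβ.trans hβm
  set θ : ℝ := β / m
  have hθ0 : 0 < θ := by positivity
  have hθ1 : θ < 1 := (div_lt_one hm).2 hβm
  have hsum : θ * i + θ * (m - i : ℕ) = β := by
    rw [Nat.cast_sub him.le, ← mul_add, add_sub_cancel, div_mul_cancel₀ _ hm.ne']
  obtain ⟨C, hC⟩ := exists_lintegral_hypersingularKernel_mul_diffNorm_mul_diffNorm_le E F G
    (mul_pos hθ0 hi') (mul_lt_of_lt_one_left hi' hθ1) (mul_pos hθ0 hj')
    (mul_lt_of_lt_one_left hj' hθ1)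
  rw [hsum] at hC
  refine ⟨C, fun f g ↦ (hC f g).trans ?_⟩
  gcongr
  · exact homSobolevNorm_le_sobolevNorm (by positivity) (by nlinarith) _
  · exact homSobolevNorm_le_sobolevNorm (by positivity) (by nlinarith) _

theorem exists_lintegral_hypersingularKernel_mul_eLpNorm_leibnizDefect_le {β : ℝ} {k : ℕ}
    (hβ : 0 < β) (hβk : β < 2 * k) :
    ∃ C : ℝ, ∀ f g : 𝓢(E, ℂ),
      ∫⁻ y, ENNReal.ofReal (hypersingularKernel β y) * eLpNorm (leibnizDefect k y f g) 1 volume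
        ≤ ENNReal.ofReal C * (sobolevNorm β f * sobolevNorm β g) := by
  have hk : k ≠ 0 := by
    rintro rfl
    norm_num at hβk
    exact hβ.not_gt hβk
  have hβk' : β < (2 * k : ℕ) := by exact_mod_cast hβk
  choose! C hC using fun i (hi : i ∈ Finset.Ico 1 (2 * k)) ↦
    exists_lintegral_hypersingularKernel_mul_diffNorm_mul_diffNorm_sub_le E ℂ ℂ hβ hβk' hi
  refine ⟨(3 * ∑ i ∈ Finset.Ico 1 (2 * k), (2 * k).choose i * ENNReal.ofReal (C i)).toReal,
    fun f g ↦ ?_⟩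
  have hmeas (i : ℕ) : Measurable fun y ↦ ENNReal.ofReal (hypersingularKernel β y) *
      (diffNorm i f y * diffNorm (2 * k - i) g y) :=
    (measurable_hypersingularKernel β).ennreal_ofReal.mul
      ((measurable_diffNorm i f).mul (measurable_diffNorm (2 * k - i) g))
  rw [ENNReal.ofReal_toReal
    (ENNReal.mul_ne_top (by finiteness) (ENNReal.sum_ne_top.2 fun i _ ↦ by finiteness))]
  calc ∫⁻ y, ENNReal.ofReal (hypersingularKernel β y) * eLpNorm (leibnizDefect k y f g) 1 volume
      ≤ ∫⁻ y, 3 * ∑ i ∈ Finset.Ico 1 (2 * k), (2 * k).choose i *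
          (ENNReal.ofReal (hypersingularKernel β y) *
            (diffNorm i f y * diffNorm (2 * k - i) g y)) := by
        refine lintegral_mono fun y ↦ ?_
        refine (mul_le_mul_right (eLpNorm_leibnizDefect_le hk f g y) _).trans_eq ?_
        simp only [Finset.mul_sum, mul_left_comm]
    _ = 3 * ∑ i ∈ Finset.Ico 1 (2 * k), (2 * k).choose i *
          ∫⁻ y, ENNReal.ofReal (hypersingularKernel β y) *
            (diffNorm i f y * diffNorm (2 * k - i) g y) := by
        rw [lintegral_const_mul _ (by fun_prop), lintegral_finsetSum _ (by fun_prop)]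
        simp only [lintegral_const_mul _ (hmeas _)]
    _ ≤ 3 * ∑ i ∈ Finset.Ico 1 (2 * k), (2 * k).choose i *
          (ENNReal.ofReal (C i) * (sobolevNorm β f * sobolevNorm β g)) := by
        gcongr with i hi
        exact hC i hi f g
    _ = _ := by simp only [mul_assoc, Finset.sum_mul]

end DefectIntegral

lemma eLpNorm_one_integral_le {α β F : Type*} [MeasurableSpace α] [MeasurableSpace β]
    [NormedAddCommGroup F] [NormedSpace ℝ F] {μ : Measure α} {ν : Measure β} [SFinite μ]
    [SFinite ν] {G : α → β → F} (hG : AEStronglyMeasurable (Function.uncurry G) (μ.prod ν)) :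
    eLpNorm (fun x ↦ ∫ y, G y x ∂μ) 1 ν ≤ ∫⁻ y, eLpNorm (G y) 1 ν ∂μ := by
  simp only [eLpNorm_one_eq_lintegral_enorm]
  rw [lintegral_lintegral_swap hG.enorm]
  exact lintegral_mono fun x ↦ enorm_integral_le_lintegral_enorm _

section KatoPonce

variable {E : Type*} [NormedAddCommGroup E] [InnerProductSpace ℝ E] [FiniteDimensional ℝ E]
  [MeasurableSpace E] [BorelSpace E]

lemma rieszDeriv_zero {F : Type*} [NormedAddCommGroup F] [NormedSpace ℂ F] [CompleteSpace F]
    (u : 𝓢(E, F)) : rieszDeriv 0 u = u := by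
  simpa only [rieszDeriv, Real.rpow_zero, one_smul, fourier_coe] using fourierInv_fourier_coe u

lemma eLpNorm_two_le_sobolevNorm {β : ℝ} (hβ : 0 ≤ β) (u : 𝓢(E, ℂ)) :
    eLpNorm u 2 volume ≤ sobolevNorm β u := by
  rw [← rieszDeriv_zero u, eLpNorm_rieszDeriv le_rfl, rieszDeriv_zero]
  exact homSobolevNorm_le_sobolevNorm le_rfl hβ u

lemma eLpNorm_rieszDeriv_le_sobolevNorm {β : ℝ} (hβ : 0 ≤ β) (u : 𝓢(E, ℂ)) :
    eLpNorm (rieszDeriv β u) 2 volume ≤ sobolevNorm β u :=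
  (eLpNorm_rieszDeriv hβ u).trans_le (homSobolevNorm_le_sobolevNorm hβ le_rfl u)

theorem exists_rieszDeriv_mul_eq (E : Type*) [NormedAddCommGroup E] [InnerProductSpace ℝ E]
    [FiniteDimensional ℝ E] [MeasurableSpace E] [BorelSpace E] [Nontrivial E] {β : ℝ} {k : ℕ}
    (hβ : 0 < β) (hβk : β < 2 * k) :
    ∃ c : ℝ, 0 < c ∧ ∀ (f g : 𝓢(E, ℂ)) (x : E),
      rieszDeriv β (fun x ↦ f x * g x) x = f x * rieszDeriv β g x + rieszDeriv β f x * g x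
        + c⁻¹ • ∫ y, hypersingularKernel β y • leibnizDefect k y f g x := by
  obtain ⟨c, hc, hrep⟩ := exists_integral_hypersingularKernel_smul_centralDiff E ℂ hβ hβk
  refine ⟨c, hc, fun f g x ↦ ?_⟩
  obtain ⟨hfg_int, hfg⟩ := hrep (pairing (.mul ℂ ℂ) f g) x
  obtain ⟨hf_int, hf⟩ := hrep f x
  obtain ⟨hg_int, hg⟩ := hrep g x
  have hdefect : ∫ y, hypersingularKernel β y • leibnizDefect k y f g x
      = c • rieszDeriv β (fun x ↦ f x * g x) x - f x * (c • rieszDeriv β g x)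
        - (c • rieszDeriv β f x) * g x := by
    have hsplit (y : E) : hypersingularKernel β y • leibnizDefect k y f g x
        = hypersingularKernel β y • centralDiff k y (pairing (.mul ℂ ℂ) f g) x
          - f x * (hypersingularKernel β y • centralDiff k y g x)
          - (hypersingularKernel β y • centralDiff k y f x) * g x := by
      simp only [mul_smul_comm, smul_mul_assoc, ← smul_sub]
      rfl
    simp only [hsplit]
    have hsub : Integrable fun y ↦ hypersingularKernel β y •
        centralDiff k y (pairing (.mul ℂ ℂ) f g) x
        - f x * (hypersingularKernel β y • centralDiff k y g x) := hfg_int.sub (hg_int.const_mul _)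
    rw [integral_sub hsub (hf_int.mul_const _),
      integral_sub hfg_int (hg_int.const_mul _), integral_const_mul, integral_mul_const, hfg, hf,
      hg]
    rfl
  rw [hdefect, mul_smul_comm, smul_mul_assoc, ← smul_sub, ← smul_sub, inv_smul_smul₀ hc.ne']
  ring

lemma aestronglyMeasurable_hypersingularKernel_smul_leibnizDefect {f g : E → ℂ}
    (hf : Continuous f) (hg : Continuous g) (β : ℝ) (k : ℕ) :
    AEStronglyMeasurable (Function.uncurry fun y x ↦
      hypersingularKernel β y • leibnizDefect k y f g x) (volume.prod volume) :=
  ((measurable_hypersingularKernel β).comp measurable_fst).aestronglyMeasurable.smul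
    (continuous_leibnizDefect hf hg k).aestronglyMeasurable

lemma eLpNorm_integral_leibnizDefect_le {f g : E → ℂ} (hf : Continuous f) (hg : Continuous g)
    (β : ℝ) (k : ℕ) :
    eLpNorm (fun x ↦ ∫ y, hypersingularKernel β y • leibnizDefect k y f g x) 1 volume
      ≤ ∫⁻ y, ENNReal.ofReal (hypersingularKernel β y) *
          eLpNorm (leibnizDefect k y f g) 1 volume := by
  refine (eLpNorm_one_integral_le (aestronglyMeasurable_hypersingularKernel_smul_leibnizDefect
    hf hg β k)).trans_eq (lintegral_congr fun y ↦ ?_)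
  have h := eLpNorm_const_smul (hypersingularKernel β y) (leibnizDefect k y f g) 1 volume
  rwa [Real.enorm_of_nonneg (hypersingularKernel_nonneg β y)] at h

lemma eLpNorm_mul_rieszDeriv_le {β : ℝ} (hβ : 0 ≤ β) (f g : 𝓢(E, ℂ)) :
    eLpNorm (fun x ↦ f x * rieszDeriv β g x) 1 volume ≤ sobolevNorm β f * sobolevNorm β g :=
  (eLpNorm_one_mul_le f.continuous.aestronglyMeasurable
    (continuous_rieszDeriv hβ g).aestronglyMeasurable).trans <|
    mul_le_mul' (eLpNorm_two_le_sobolevNorm hβ f) (eLpNorm_rieszDeriv_le_sobolevNorm hβ g)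

lemma exists_eLpNorm_rieszDeriv_mul_le_of_pos (E : Type*) [NormedAddCommGroup E]
    [InnerProductSpace ℝ E] [FiniteDimensional ℝ E] [MeasurableSpace E] [BorelSpace E]
    [Nontrivial E] {β : ℝ} (hβ : 0 < β) :
    ∃ C : ℝ, 0 < C ∧ ∀ f g : 𝓢(E, ℂ), eLpNorm (rieszDeriv β fun x ↦ f x * g x) 1 volume
      ≤ ENNReal.ofReal C * (sobolevNorm β f * sobolevNorm β g) := by
  obtain ⟨k, hk⟩ := exists_nat_gt (β / 2)
  have hβk : β < 2 * k := by linarith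
  obtain ⟨c, hc, hleibniz⟩ := exists_rieszDeriv_mul_eq E hβ hβk
  obtain ⟨C, hC⟩ := exists_lintegral_hypersingularKernel_mul_eLpNorm_leibnizDefect_le E hβ hβk
  refine ⟨(2 + ENNReal.ofReal c⁻¹ * ENNReal.ofReal C).toReal,
    ENNReal.toReal_pos (by simp) (by finiteness), fun f g ↦ ?_⟩
  set S := sobolevNorm β f * sobolevNorm β g with hS
  let P : E → ℂ := fun x ↦ f x * rieszDeriv β g x
  let Q : E → ℂ := fun x ↦ rieszDeriv β f x * g x
  let R : E → ℂ := fun x ↦ ∫ y, hypersingularKernel β y • leibnizDefect k y f g x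
  have hPm : AEStronglyMeasurable P :=
    (f.continuous.mul (continuous_rieszDeriv hβ.le g)).aestronglyMeasurable
  have hQm : AEStronglyMeasurable Q :=
    ((continuous_rieszDeriv hβ.le f).mul g.continuous).aestronglyMeasurable
  have hRm : AEStronglyMeasurable R :=
    (aestronglyMeasurable_hypersingularKernel_smul_leibnizDefect f.continuous g.continuous β
      k).prod_swap.integral_prod_right'
  have hP : eLpNorm P 1 volume ≤ S := eLpNorm_mul_rieszDeriv_le hβ.le f g
  have hQ : eLpNorm Q 1 volume ≤ S := by
    simpa only [Q, hS, mul_comm] using eLpNorm_mul_rieszDeriv_le hβ.le g f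
  have hR : eLpNorm (c⁻¹ • R) 1 volume ≤ ENNReal.ofReal c⁻¹ * (ENNReal.ofReal C * S) := by
    rw [eLpNorm_const_smul, Real.enorm_of_nonneg (inv_nonneg.2 hc.le)]
    gcongr
    exact (eLpNorm_integral_leibnizDefect_le f.continuous g.continuous β k).trans (hC f g)
  rw [ENNReal.ofReal_toReal (by finiteness)]
  calc eLpNorm (rieszDeriv β fun x ↦ f x * g x) 1 volume
      = eLpNorm (P + Q + c⁻¹ • R) 1 volume := by rw [funext (hleibniz f g)]; rfl
    _ ≤ S + S + ENNReal.ofReal c⁻¹ * (ENNReal.ofReal C * S) :=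
        (eLpNorm_add_le (hPm.add hQm) (hRm.const_smul c⁻¹) le_rfl).trans <|
          add_le_add ((eLpNorm_add_le hPm hQm le_rfl).trans (add_le_add hP hQ)) hR
    _ = (2 + ENNReal.ofReal c⁻¹ * ENNReal.ofReal C) * S := by ring

theorem exists_eLpNorm_rieszDeriv_mul_le (E : Type*) [NormedAddCommGroup E]
    [InnerProductSpace ℝ E] [FiniteDimensional ℝ E] [MeasurableSpace E] [BorelSpace E]
    [Nontrivial E] {β : ℝ} (hβ : 0 ≤ β) :
    ∃ C : ℝ, 0 < C ∧ ∀ f g : 𝓢(E, ℂ), eLpNorm (rieszDeriv β fun x ↦ f x * g x) 1 volume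
      ≤ ENNReal.ofReal C * (sobolevNorm β f * sobolevNorm β g) := by
  obtain rfl | hβ0 := hβ.eq_or_lt
  · refine ⟨1, one_pos, fun f g ↦ ?_⟩
    have hfg : rieszDeriv 0 (fun x ↦ f x * g x) = fun x ↦ f x * g x :=
      rieszDeriv_zero (pairing (.mul ℂ ℂ) f g)
    simpa only [hfg, rieszDeriv_zero, ENNReal.ofReal_one, one_mul] using
      eLpNorm_mul_rieszDeriv_le le_rfl f g
  · exact exists_eLpNorm_rieszDeriv_mul_le_of_pos E hβ0

end KatoPonce

section AngularFrequency

variable {n : ℕ}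

lemma ft_two_pi_smul (f : Euc n → ℂ) (ξ : Euc n) : ft f ((2 * Real.pi) • ξ) = 𝓕 f ξ := by
  rw [Real.fourier_eq', ft]
  refine integral_congr_ae (.of_forall fun x ↦ ?_)
  dsimp only
  rw [real_inner_smul_left, real_inner_comm, smul_eq_mul]
  push_cast
  ring_nf

lemma fracLap_eq_smul_rieszDeriv (β : ℝ) (u : Euc n → ℂ) :
    fracLap β u = (2 * Real.pi) ^ β • rieszDeriv β u := by
  funext x
  have hpi : 0 ≤ 2 * Real.pi := by positivity
  have hscale := Measure.integral_comp_smul volume (fun ξ : Euc n ↦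
    Complex.exp (Complex.I * (⟪ξ, x⟫ : ℝ)) * ((‖ξ‖ ^ β : ℝ) * ft u ξ)) (2 * Real.pi)
  rw [finrank_euclideanSpace_fin, abs_of_nonneg (by positivity)] at hscale
  rw [fracLap, ← hscale, Pi.smul_apply, rieszDeriv, Real.fourierInv_eq', ← integral_smul]
  refine integral_congr_ae (.of_forall fun ξ ↦ ?_)
  simp only [ft_two_pi_smul, real_inner_smul_left, norm_smul, Real.norm_of_nonneg hpi,
    Real.mul_rpow hpi (norm_nonneg ξ), Complex.real_smul, smul_eq_mul]
  push_cast
  ring_nf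

lemma eLpNorm_comp_smul_le {F : Type*} [NormedAddCommGroup F] (h : Euc n → F) (p : ℝ≥0∞) {r : ℝ}
    (hr : 1 ≤ r) : eLpNorm (fun ξ ↦ h (r • ξ)) p volume ≤ eLpNorm h p volume := by
  have hr0 : r ≠ 0 := by positivity
  have hemb : MeasurableEmbedding fun ξ : Euc n ↦ r • ξ :=
    (Homeomorph.smulOfNeZero r hr0).measurableEmbedding
  rw [show (fun ξ ↦ h (r • ξ)) = h ∘ (r • ·) from rfl, ← hemb.eLpNorm_map_measure,
    Measure.map_addHaar_smul volume hr0]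
  refine eLpNorm_mono_measure h (Measure.le_iff.2 fun s _ ↦ mul_le_of_le_one_left zero_le ?_)
  rw [ENNReal.ofReal_le_one, abs_of_nonneg (by positivity)]
  exact inv_le_one_of_one_le₀ (one_le_pow₀ hr)

lemma sobolevNorm_le_eLpNorm_jap {β : ℝ} (hβ : 0 ≤ β) (u : Euc n → ℂ) :
    sobolevNorm β u ≤ eLpNorm (fun ξ ↦ jap ξ ^ β • ft u ξ) 2 volume := by
  have hpi : 1 ≤ 2 * Real.pi := by linarith [Real.two_le_pi]
  refine le_trans (eLpNorm_mono fun ξ ↦ ?_)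
    (eLpNorm_comp_smul_le (fun ξ ↦ jap ξ ^ β • ft u ξ) 2 hpi)
  rw [ft_two_pi_smul, norm_smul, norm_smul, jap, Real.sqrt_eq_rpow, ← Real.rpow_mul (by positivity),
    one_div_mul_eq_div, Real.norm_of_nonneg (by positivity), Real.norm_of_nonneg (by positivity),
    norm_smul, Real.norm_of_nonneg (by positivity)]
  gcongr
  exact le_mul_of_one_le_left (norm_nonneg ξ) hpi

end AngularFrequency

theorem stmt11_general (n : ℕ) (hn : 1 ≤ n) (β : ℝ) (hβ : 0 ≤ β) :
    ∃ C : ℝ, 0 < C ∧ ∀ f g : 𝓢(Euc n, ℂ),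
      eLpNorm (fracLap β fun x ↦ f x * g x) 1 volume
        ≤ ENNReal.ofReal C *
          eLpNorm (fun ξ ↦ jap ξ ^ β • ft f ξ) 2 volume *
          eLpNorm (fun ξ ↦ jap ξ ^ β • ft g ξ) 2 volume := by
  have : Nonempty (Fin n) := ⟨⟨0, hn⟩⟩
  obtain ⟨C, hC, hrieszDeriv⟩ := exists_eLpNorm_rieszDeriv_mul_le (Euc n) hβ
  have hpi : 0 < (2 * Real.pi) ^ β := by positivity
  refine ⟨(2 * Real.pi) ^ β * C, by positivity, fun f g ↦ ?_⟩
  rw [fracLap_eq_smul_rieszDeriv, eLpNorm_const_smul, Real.enorm_of_nonneg hpi.le,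
    ENNReal.ofReal_mul hpi.le, mul_assoc, mul_assoc]
  gcongr
  refine (hrieszDeriv f g).trans ?_
  gcongr
  · exact sobolevNorm_le_eLpNorm_jap hβ f
  · exact sobolevNorm_le_eLpNorm_jap hβ g

/-- `‖(-Δ)^{β/2}(fg)‖_{L¹} ≤ C ‖f‖_{W^{β,2}} ‖g‖_{W^{β,2}}` for smooth,
compactly supported `f, g`, where `‖f‖_{W^{β,2}} = ‖⟨·⟩^β f̂‖_{L²}`. -/
theorem stmt11 (n : ℕ) (hn : 1 ≤ n) (β : ℝ) (hβ : 0 ≤ β) :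
    ∃ C : ℝ, 0 < C ∧
      ∀ f g : Euc n → ℂ,
        ContDiff ℝ (⊤ : ℕ∞) f → HasCompactSupport f →
        ContDiff ℝ (⊤ : ℕ∞) g → HasCompactSupport g →
        eLpNorm (fracLap β fun x => f x * g x) 1 volume
          ≤ ENNReal.ofReal C *
            eLpNorm (fun ξ : Euc n => (jap ξ ^ β : ℝ) • ft f ξ) 2 volume *
            eLpNorm (fun ξ : Euc n => (jap ξ ^ β : ℝ) • ft g ξ) 2 volume := by
  obtain ⟨C, hC, h⟩ := stmt11_general n hn β hβ
  exact ⟨C, hC, fun f g hf hf' hg hg' ↦ h (hf'.toSchwartzMap hf) (hg'.toSchwartzMap hg)⟩
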